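/- arXiv:1909.10445 — 2 statements merged into one kernel-verified Lean document; each statement's English description precedes it below -/
import Mathlib

section
/- Let n be a square-free positive integer. Under the action of the Hecke group H(λ₄) on Q*(√-n), every orbit contains a totally positive element: for every α ∈ Q*(√-n) there exists β ∈ Q*(√-n) with Re(β) > 0 lying in the same orbit as α. -/
open Complex

/-- The set `Q*(√-n)` of complex numbers `(a + √n·i)/c` with `a, c ∈ ℤ`,
`c` even and nonzero, and `c ∣ a² + n`. -/
def Qstar (n : ℕ) : Set ℂ :=
  {z | ∃ a c : ℤ, c ≠ 0 ∧ 2 ∣ c ∧ c ∣ (a ^ 2 + (n : ℤ)) ∧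
    z = ((a : ℂ) + Real.sqrt n * Complex.I) / (c : ℂ)}

/-- The Hecke transformation `x(z) = -1/(2z)`. -/
noncomputable def heckeX (z : ℂ) : ℂ := -1 / (2 * z)

/-- The Hecke transformation `y(z) = -1/(2(z+1))`. -/
noncomputable def heckeY (z : ℂ) : ℂ := -1 / (2 * (z + 1))

/-- One step of the Hecke group action. -/
noncomputable def heckeStep (z w : ℂ) : Prop := w = heckeX z ∨ w = heckeY z

/-- Two elements lie in the same orbit if they are related by the equivalence
relation on `Q*(√-n)` generated by `z ~ x(z)` and `z ~ y(z)`. -/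
def sameOrbit (n : ℕ) (z w : ℂ) : Prop :=
  Relation.EqvGen (fun u v => u ∈ Qstar n ∧ v ∈ Qstar n ∧ heckeStep u v) z w

/-- The quadruplet `Q_α = {α, y(α), y²(α), y³(α)}`. -/
noncomputable def quad (α : ℂ) : Set ℂ :=
  {α, heckeY α, heckeY (heckeY α), heckeY (heckeY (heckeY α))}

/-- The orbit relation on the subtype `Q*(√-n)`. -/
def orbitRel (n : ℕ) (u v : {z : ℂ // z ∈ Qstar n}) : Prop :=
  sameOrbit n u.1 v.1

/-- `E_i(n)`: the number of positive even integers `C` dividing `i² + n`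
with `2(i²+n)/C + C ≤ 3i`. -/
def Efun (i n : ℕ) : ℕ :=
  ((i ^ 2 + n).divisors.filter (fun C => 2 ∣ C ∧ 2 * (i ^ 2 + n) / C + C ≤ 3 * i)).card

theorem Qstar_add_one {n : ℕ} {z : ℂ} (hz : z ∈ Qstar n) : z + 1 ∈ Qstar n := by
  obtain ⟨a, c, hc, h2, hd, rfl⟩ := hz
  refine ⟨a + c, c, hc, h2, ?_, ?_⟩
  · have : (a + c) ^ 2 + (n : ℤ) = (a ^ 2 + n) + c * (2 * a + c) := by ring
    rw [this]
    exact dvd_add hd (dvd_mul_right _ _)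
  · have hc' : (c : ℂ) ≠ 0 := by exact_mod_cast hc
    field_simp
    push_cast
    ring

theorem Qstar_heckeX {n : ℕ} (hn : 0 < n) {z : ℂ} (hz : z ∈ Qstar n) :
    heckeX z ∈ Qstar n := by
  obtain ⟨a, c, hc, ⟨d, hd2⟩, ⟨b, hb⟩, rfl⟩ := hz
  have hpos : 0 < a ^ 2 + (n : ℤ) := by positivity
  have hb0 : b ≠ 0 := by
    rintro rfl
    simp at hb
    omega
  refine ⟨-a, 2 * b, by simpa using hb0, dvd_mul_right _ _, ⟨d, ?_⟩, ?_⟩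
  · rw [neg_sq, hb, hd2]; ring
  · have hc' : (c : ℂ) ≠ 0 := by exact_mod_cast hc
    have hb' : (b : ℂ) ≠ 0 := by exact_mod_cast hb0
    have hs : ((Real.sqrt n : ℝ) : ℂ) ^ 2 = (n : ℂ) := by
      rw [← Complex.ofReal_pow, Real.sq_sqrt (by positivity)]
      simp
    have hbC : (a : ℂ) ^ 2 + (n : ℂ) = c * b := by exact_mod_cast hb
    have key : ((a : ℂ) + Real.sqrt n * Complex.I) * (-a + Real.sqrt n * Complex.I)
        = - (c * b) := by
      rw [← hbC, ← hs]
      linear_combination ((Real.sqrt n : ℝ) : ℂ) ^ 2 * Complex.I_sq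
    have hw : (a : ℂ) + Real.sqrt n * Complex.I ≠ 0 := by
      intro h
      rw [h, zero_mul] at key
      exact mul_ne_zero hc' hb' (neg_eq_zero.mp key.symm)
    unfold heckeX
    push_cast
    rw [← mul_div_assoc, div_div_eq_mul_div,
      div_eq_div_iff (mul_ne_zero two_ne_zero hw) (mul_ne_zero two_ne_zero hb')]
    linear_combination (-2) * key

theorem sameOrbit_add_one {n : ℕ} (hn : 0 < n) {z : ℂ} (hz : z ∈ Qstar n) :
    sameOrbit n z (z + 1) := by
  have h1 := Qstar_add_one hz
  have h2 := Qstar_heckeX hn h1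
  exact Relation.EqvGen.trans _ (heckeX (z + 1)) _
    (Relation.EqvGen.rel _ _ ⟨hz, h2, Or.inr rfl⟩)
    (Relation.EqvGen.symm _ _ (Relation.EqvGen.rel _ _ ⟨h1, h2, Or.inl rfl⟩))

theorem sameOrbit_add_nat {n : ℕ} (hn : 0 < n) {z : ℂ} (hz : z ∈ Qstar n) (k : ℕ) :
    z + k ∈ Qstar n ∧ sameOrbit n z (z + k) := by
  induction k with
  | zero =>
    rw [Nat.cast_zero, add_zero]
    exact ⟨hz, Relation.EqvGen.refl z⟩
  | succ k ih =>
    have e : z + ((k + 1 : ℕ) : ℂ) = z + k + 1 := by push_cast; ring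
    rw [e]
    exact ⟨Qstar_add_one ih.1, Relation.EqvGen.trans _ _ _ ih.2 (sameOrbit_add_one hn ih.1)⟩

theorem stmt8 (n : ℕ) (hn : 0 < n) (hsf : Squarefree n)
    (α : ℂ) (hα : α ∈ Qstar n) :
    ∃ β ∈ Qstar n, 0 < β.re ∧ sameOrbit n α β := by
  obtain ⟨k, hk⟩ := exists_nat_gt (-α.re)
  obtain ⟨h1, h2⟩ := sameOrbit_add_nat hn hα k
  refine ⟨α + k, h1, ?_, h2⟩
  simp
  linarith
end

section
/- For n = 1 and for n = 2, the action of the Hecke group H(λ₄) on Q*(√-n) has exactly 2 orbits; that is, the quotient of Q*(√-n) by the orbit equivalence relation has exactly two elements. -/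
open Complex

/-- The element with parameters `a`, `c`. -/
noncomputable def qval (n : ℕ) (a c : ℤ) : ℂ :=
  ((a : ℂ) + Real.sqrt n * Complex.I) / (c : ℂ)

/-- Admissible parameters. -/
def Adm (n : ℕ) (a c : ℤ) : Prop := c ≠ 0 ∧ 2 ∣ c ∧ c ∣ (a ^ 2 + (n : ℤ))

lemma Adm.mem {n : ℕ} {a c : ℤ} (h : Adm n a c) : qval n a c ∈ Qstar n :=
  ⟨a, c, h.1, h.2.1, h.2.2, rfl⟩

lemma sqrt_I_sq (n : ℕ) : ((Real.sqrt n : ℂ) * Complex.I) ^ 2 = -(n : ℂ) := by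
  rw [mul_pow, Complex.I_sq, ← Complex.ofReal_pow, Real.sq_sqrt (Nat.cast_nonneg n)]
  simp

lemma num_ne {n : ℕ} (hn : 0 < n) (a : ℤ) : (a : ℂ) + Real.sqrt n * Complex.I ≠ 0 := by
  intro h
  have h2 := congrArg Complex.im h
  simp at h2
  omega

lemma heckeX_qval {n : ℕ} (hn : 0 < n) {a c b : ℤ} (hc : c ≠ 0)
    (hb : a ^ 2 + (n : ℤ) = c * b) : heckeX (qval n a c) = qval n (-a) (2 * b) := by
  have hb0 : b ≠ 0 := by
    rintro rfl
    have : (0 : ℤ) < n := by exact_mod_cast hn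
    nlinarith [sq_nonneg a]
  have h1 := num_ne hn a
  have h2 := sqrt_I_sq n
  have h3 : (a : ℂ) ^ 2 + n = c * b := by exact_mod_cast hb
  have hc' : (c : ℂ) ≠ 0 := by exact_mod_cast hc
  have hb' : (b : ℂ) ≠ 0 := by exact_mod_cast hb0
  unfold heckeX qval
  push_cast
  generalize (Real.sqrt n : ℂ) * Complex.I = s at *
  rw [div_eq_div_iff (by
    refine mul_ne_zero two_ne_zero (div_ne_zero h1 hc')) (mul_ne_zero two_ne_zero hb')]
  field_simp
  linear_combination h3 - h2

lemma Adm.inv {n : ℕ} (hn : 0 < n) {a c b : ℤ} (h : Adm n a c)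
    (hb : a ^ 2 + (n : ℤ) = c * b) : Adm n (-a) (2 * b) := by
  obtain ⟨h1, ⟨d, rfl⟩, h3⟩ := h
  refine ⟨?_, ⟨b, rfl⟩, ⟨d, by rw [neg_sq, hb]; ring⟩⟩
  intro h0
  have hb0 : b = 0 := by omega
  subst hb0
  have : (0 : ℤ) < n := by exact_mod_cast hn
  nlinarith [sq_nonneg a]

lemma Adm.shift {n : ℕ} {a c : ℤ} (h : Adm n a c) (k : ℤ) : Adm n (a + k * c) c := by
  obtain ⟨h1, h2, b, hb⟩ := h
  exact ⟨h1, h2, b + 2 * k * a + k ^ 2 * c, by linear_combination hb⟩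

lemma orbit_inv {n : ℕ} (hn : 0 < n) {a c b : ℤ} (h : Adm n a c)
    (hb : a ^ 2 + (n : ℤ) = c * b) :
    sameOrbit n (qval n a c) (qval n (-a) (2 * b)) :=
  Relation.EqvGen.rel _ _ ⟨h.mem, (h.inv hn hb).mem, Or.inl (heckeX_qval hn h.1 hb).symm⟩

lemma orbit_one {n : ℕ} (hn : 0 < n) {a c : ℤ} (h : Adm n a c) :
    sameOrbit n (qval n a c) (qval n (a + c) c) := by
  have h' : Adm n (a + c) c := by simpa using h.shift 1
  obtain ⟨b, hb⟩ := h'.2.2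
  refine Relation.EqvGen.trans _ (qval n (-(a + c)) (2 * b)) _ ?_
    (Relation.EqvGen.symm _ _ (orbit_inv hn h' hb))
  refine Relation.EqvGen.rel _ _ ⟨h.mem, (h'.inv hn hb).mem, Or.inr ?_⟩
  rw [← heckeX_qval hn h.1 hb]
  have hc' : (c : ℂ) ≠ 0 := by exact_mod_cast h.1
  have : qval n (a + c) c = qval n a c + 1 := by
    unfold qval
    push_cast
    field_simp
    ring
  rw [this]
  rfl

lemma orbit_shift {n : ℕ} (hn : 0 < n) {a c : ℤ} (h : Adm n a c) (k : ℤ) :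
    sameOrbit n (qval n a c) (qval n (a + k * c) c) := by
  induction k using Int.induction_on with
  | zero => 
    simp only [zero_mul, add_zero]
    exact Relation.EqvGen.refl _
  | succ i ih =>
    have := orbit_one hn (h.shift i)
    rw [show a + ((i : ℤ) + 1) * c = a + i * c + c by ring]
    exact Relation.EqvGen.trans _ _ _ ih this
  | pred i ih =>
    have := orbit_one hn (h.shift (-(i : ℤ) - 1))
    rw [show a + (-(i : ℤ) - 1) * c + c = a + -(i : ℤ) * c by ring] at this
    exact Relation.EqvGen.trans _ _ _ ih (Relation.EqvGen.symm _ _ this)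

lemma exists_shift (a c : ℤ) (hc : c ≠ 0) : ∃ k : ℤ, 2 * |a + k * c| ≤ |c| := by
  refine ⟨-round ((a : ℚ) / c), ?_⟩
  have h := abs_sub_round ((a : ℚ) / c)
  have hc' : (c : ℚ) ≠ 0 := by exact_mod_cast hc
  have h2 : (a : ℚ) + -(round ((a : ℚ) / c) : ℚ) * c = ((a : ℚ) / c - round ((a : ℚ) / c)) * c := by
    field_simp
    ring
  have h3 : 2 * |(a : ℚ) + -(round ((a : ℚ) / c) : ℚ) * c| ≤ |(c : ℚ)| := by
    rw [h2, abs_mul]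
    nlinarith [abs_nonneg (c : ℚ)]
  exact_mod_cast h3

lemma reduce {n : ℕ} (hn : n = 1 ∨ n = 2) (N : ℕ) : ∀ a c : ℤ, Adm n a c → c.natAbs ≤ N →
    sameOrbit n (qval n a c) (qval n (2 - n) (2 * c.sign)) := by
  have hn0 : 0 < n := by omega
  have hnz : (0 : ℤ) < n := by exact_mod_cast hn0
  induction N with
  | zero =>
    intro a c h hN
    exact absurd (by omega) h.1
  | succ N ih =>
    intro a c h hN
    obtain ⟨k, hk⟩ := exists_shift a c h.1
    refine Relation.EqvGen.trans _ _ _ (orbit_shift hn0 h k) ?_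
    have h' := h.shift k
    generalize a + k * c = a' at *
    obtain ⟨b, hb⟩ := h'.2.2
    have hcb : 0 < c * b := by rw [← hb]; positivity
    by_cases hlt : (2 * b).natAbs < c.natAbs
    · refine Relation.EqvGen.trans _ _ _ (orbit_inv hn0 h' hb) ?_
      have := ih _ _ (h'.inv hn0 hb) (by omega)
      have hs : (2 * b).sign = c.sign := by
        rcases pos_and_pos_or_neg_and_neg_of_mul_pos hcb with ⟨h1, h2⟩ | ⟨h1, h2⟩
        · rw [Int.sign_eq_one_of_pos h1, Int.sign_eq_one_of_pos (by omega)]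
        · rw [Int.sign_eq_neg_one_of_neg h1, Int.sign_eq_neg_one_of_neg (by omega)]
      rwa [hs] at this
    · have hle : |c| ≤ 2 * |b| := by
        have : c.natAbs ≤ (2 * b).natAbs := by omega
        rw [Int.natAbs_mul] at this
        have h2 : (c.natAbs : ℤ) ≤ 2 * b.natAbs := by exact_mod_cast this
        simpa using h2
      have hcb' : |c| * |b| = a' ^ 2 + n := by rw [← abs_mul, abs_of_pos hcb, hb]
      have hsq : |a'| ^ 2 = a' ^ 2 := sq_abs a'
      have hc2 : |c| ^ 2 ≤ 4 * n := by
        nlinarith [abs_nonneg c, abs_nonneg a', abs_nonneg b]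
      have hn2 : (n : ℤ) ≤ 2 := by omega
      have hc3 : |c| < 3 := by
        by_contra hcon
        push Not at hcon
        nlinarith
      obtain ⟨d, hd⟩ := h.2.1
      have hc0 := h.1
      have hcc : c = 2 ∨ c = -2 := by
        rw [abs_lt] at hc3
        omega
      have ha : a' = -1 ∨ a' = 0 ∨ a' = 1 := by
        have : |a'| ≤ 1 := by omega
        rw [abs_le] at this
        omega
      have key : ∃ j : ℤ, a' + j * c = 2 - n := by
        rcases hn with rfl | rfl <;> rcases hcc with rfl | rfl <;>
          rcases ha with rfl | rfl | rfl <;> norm_num at hb <;>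
          first
          | (refine ⟨0, ?_⟩; norm_num; done)
          | (refine ⟨1, ?_⟩; norm_num; done)
          | (refine ⟨-1, ?_⟩; norm_num; done)
          | (exfalso; omega)
      obtain ⟨j, hj⟩ := key
      have := orbit_shift hn0 h' j
      rw [hj] at this
      have hs : 2 * c.sign = c := by rcases hcc with rfl | rfl <;> rfl
      rwa [hs]

lemma heckeX_im (z : ℂ) : 0 < z.im ↔ 0 < (heckeX z).im := by
  by_cases hz : z = 0
  · simp [hz, heckeX]
  have h : (heckeX z).im = z.im / (2 * Complex.normSq z) := by
    have : heckeX z = ((-1 / 2 : ℝ) : ℂ) * z⁻¹ := by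
      unfold heckeX
      push_cast
      field_simp
    rw [this, Complex.im_ofReal_mul, Complex.inv_im]
    have := (Complex.normSq_pos.2 hz).ne'
    field_simp
  rw [h]
  have := Complex.normSq_pos.2 hz
  exact (div_pos_iff_of_pos_right (by positivity)).symm

lemma orbit_im {n : ℕ} {z w : ℂ} (h : sameOrbit n z w) : 0 < z.im ↔ 0 < w.im := by
  induction h with
  | rel u v h =>
    rcases h.2.2 with rfl | rfl
    · exact heckeX_im u
    · have := heckeX_im (u + 1)
      simpa [heckeX, heckeY] using this
  | refl => rfl
  | symm _ _ _ ih => exact ih.symm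
  | trans _ _ _ _ _ ih1 ih2 => exact ih1.trans ih2

lemma qval_im (n : ℕ) (a c : ℤ) : (qval n a c).im = Real.sqrt n / c := by
  unfold qval
  rw [← Complex.ofReal_intCast c, Complex.div_ofReal_im]
  simp

lemma card_two {n : ℕ} (hn : n = 1 ∨ n = 2) : Nat.card (Quot (orbitRel n)) = 2 := by
  have hp : Adm n (2 - n) 2 := by
    rcases hn with rfl | rfl <;> refine ⟨?_, ?_, ?_⟩ <;> norm_num
  have hm : Adm n (2 - n) (-2) := by
    rcases hn with rfl | rfl <;> refine ⟨?_, ?_, ?_⟩ <;> norm_num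
  rw [Nat.card_eq_two_iff]
  refine ⟨Quot.mk _ ⟨_, hp.mem⟩, Quot.mk _ ⟨_, hm.mem⟩, ?_, ?_⟩
  · intro h
    have h2 := congrArg (Quot.lift (fun u : {z : ℂ // z ∈ Qstar n} => 0 < u.1.im)
      (fun u v huv => propext (orbit_im huv))) h
    simp only [qval_im] at h2
    have hs : 0 < Real.sqrt n := Real.sqrt_pos.2 (by
      have : 0 < n := by omega
      exact_mod_cast this)
    have h3 : 0 < Real.sqrt n / ((-2 : ℤ) : ℝ) := by
      rw [← h2]
      push_cast
      positivity
    push_cast at h3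
    linarith
  · rw [Set.eq_univ_iff_forall]
    intro q
    induction q using Quot.ind with
    | mk u =>
      obtain ⟨z, a, c, h1, h2, h3, rfl⟩ := u
      have hr := reduce hn c.natAbs a c ⟨h1, h2, h3⟩ le_rfl
      rcases lt_or_gt_of_ne h1 with h | h
      · right
        rw [Int.sign_eq_neg_one_of_neg h] at hr
        exact Quot.sound hr
      · left
        rw [Int.sign_eq_one_of_pos h] at hr
        exact Quot.sound hr

theorem stmt15 :
    Nat.card (Quot (orbitRel 1)) = 2 ∧ Nat.card (Quot (orbitRel 2)) = 2 := ⟨card_two (Or.inl rfl), card_two (Or.inr rfl)⟩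
end
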